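/- Let a ∈ L¹(ℝ₊)^{p×p}, b ∈ L¹(ℝ₊)^{p×q}, c ∈ L¹(ℝ₋)^{q×p}, d ∈ L¹(ℝ₋)^{q×q}, set α = e_p + a, β = b, γ = c, δ = e_q + d, and assume both a* + a + a*⋆a − c*⋆c = 0, d* + d + d*⋆d − b*⋆b = 0, b + a*⋆b = c* + c*⋆d, and the transposed identities a + a* + a⋆a* − b⋆b* = 0, d + d* + d⋆d* − c⋆c* = 0, c* + a⋆c* = b + b⋆d*. Let M = [[M₁₁, M₁₂],[M₂₁, M₂₂]] on L¹(ℝ₊)^p ⊕ L¹(ℝ₋)^q. Then M · diag(I, −I) · M = diag(M₁₁, −M₂₂); consequently M is invertible if and only if both M₁₁ and M₂₂ are invertible, and in that case M⁻¹ = [[I, −M₁₂M₂₂⁻¹],[−M₂₁M₁₁⁻¹, I]] = [[I, −M₁₁⁻¹M₁₂],[−M₂₂⁻¹M₂₁, I]]. -/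

import Mathlib

/-!
Extend everything to the whole line. Let `A = I + a⋆`, `B = b⋆`, `C = c⋆`, `D = I + d⋆` be the
convolution operators on `L¹(ℝ)` with symbols `α, β, γ, δ`, and `As, Bs, Cs, Ds` those with
symbols `α*, β*, γ*, δ*`. By associativity of convolution the kernel identities say `Θs J Θ = J`
and `Θ J Θs = J`, where `Θ = [[A, B], [C, D]]`, `Θs = [[As, Cs], [Bs, Ds]]` and `J = diag(I, -I)`
(`convM_identity`, `convM_identity'`; one off-diagonal entry is the adjoint of another one,
`adjoint_identity`).

The Wiener–Hopf and Hankel operators are compressions of `A, …, Ds` to half-lines. With `P` the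
projection onto functions supported on the positive half-line, `W = Θ P J Θs` satisfies
`W J W = Θ P J (Θs J Θ) P J Θs = W`. Since `α*, β*` are supported on the negative half-line and
`γ*, δ*` on the positive one, inner projections next to the starred operators may be dropped;
together with `Θ J Θs = J` this shows that `M` is the compression of `W + diag(0, I)` to
`L¹(ℝ₊)^p ⊕ L¹(ℝ₋)^q`. Reading `W J W = W` entrywise gives (`block_identities`)
`M₁₁² - M₁₂ M₂₁ = M₁₁`, `M₁₁ M₁₂ = M₁₂ M₂₂`, `M₂₁ M₁₁ = M₂₂ M₂₁`, `M₂₂² - M₂₁ M₁₂ = M₂₂`,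
which is the identity `M J M = diag(M₁₁, -M₂₂)`, and the statements on inverses are formal
consequences (`block_conclusion`).
-/

open MeasureTheory Set Matrix
open scoped ComplexConjugate

noncomputable section

abbrev MatF (r s : ℕ) := ℝ → Matrix (Fin r) (Fin s) ℂ

def conv {r s u : ℕ} (f : MatF r s) (h : MatF s u) : MatF r u :=
  fun t => Matrix.of fun i j => ∫ τ : ℝ, (f (t - τ) * h τ) i j

def adjF {r s : ℕ} (f : MatF r s) : MatF s r := fun t => (f (-t))ᴴ

def L1Plus {r s : ℕ} (f : MatF r s) : Prop :=
  (∀ i j, Integrable fun t => f t i j) ∧ ∀ t < (0:ℝ), f t = 0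

def L1Minus {r s : ℕ} (f : MatF r s) : Prop :=
  (∀ i j, Integrable fun t => f t i j) ∧ ∀ t > (0:ℝ), f t = 0

def μP : Measure ℝ := volume.restrict (Ici 0)
def μM : Measure ℝ := volume.restrict (Iic 0)

abbrev L1P (n : ℕ) := Lp (Fin n → ℂ) 1 μP
abbrev L1M (n : ℕ) := Lp (Fin n → ℂ) 1 μM

def IsHP {k m : ℕ} (r : MatF k m) (H : L1M m →L[ℂ] L1P k) : Prop :=
  ∀ f : L1M m, ⇑(H f) =ᵐ[μP] fun t => ∫ s, (r (t - s)).mulVec (f s) ∂μM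

def IsHM {k m : ℕ} (r : MatF k m) (H : L1P m →L[ℂ] L1M k) : Prop :=
  ∀ f : L1P m, ⇑(H f) =ᵐ[μM] fun t => ∫ s, (r (t - s)).mulVec (f s) ∂μP

def IsTP {k m : ℕ} (r₀ : Matrix (Fin k) (Fin m) ℂ) (r : MatF k m)
    (T : L1P m →L[ℂ] L1P k) : Prop :=
  ∀ f : L1P m, ⇑(T f) =ᵐ[μP] fun t => r₀.mulVec (f t) + ∫ s, (r (t - s)).mulVec (f s) ∂μP

def IsTM {k m : ℕ} (r₀ : Matrix (Fin k) (Fin m) ℂ) (r : MatF k m)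
    (T : L1M m →L[ℂ] L1M k) : Prop :=
  ∀ f : L1M m, ⇑(T f) =ᵐ[μM] fun t => r₀.mulVec (f t) + ∫ s, (r (t - s)).mulVec (f s) ∂μM

def blockCLM {X Y Z W : Type*} [NormedAddCommGroup X] [NormedSpace ℂ X]
    [NormedAddCommGroup Y] [NormedSpace ℂ Y] [NormedAddCommGroup Z] [NormedSpace ℂ Z]
    [NormedAddCommGroup W] [NormedSpace ℂ W]
    (A : X →L[ℂ] Z) (B : Y →L[ℂ] Z) (C : X →L[ℂ] W) (D : Y →L[ℂ] W) :
    (X × Y) →L[ℂ] (Z × W) :=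
  (A.comp (ContinuousLinearMap.fst ℂ X Y) + B.comp (ContinuousLinearMap.snd ℂ X Y)).prod
    (C.comp (ContinuousLinearMap.fst ℂ X Y) + D.comp (ContinuousLinearMap.snd ℂ X Y))

def InvertibleCLM {X Y : Type*} [NormedAddCommGroup X] [NormedSpace ℂ X]
    [NormedAddCommGroup Y] [NormedSpace ℂ Y] (T : X →L[ℂ] Y) : Prop :=
  ∃ S : Y →L[ℂ] X, S.comp T = ContinuousLinearMap.id ℂ X ∧ T.comp S = ContinuousLinearMap.id ℂ Y

def AeZeroPos {r s : ℕ} (f : MatF r s) : Prop := ∀ᵐ t : ℝ, 0 < t → f t = 0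
def AeZeroNeg {r s : ℕ} (f : MatF r s) : Prop := ∀ᵐ t : ℝ, t < 0 → f t = 0

def EGSol {p q : ℕ} (a : MatF p p) (b : MatF p q) (c : MatF q p) (d : MatF q q)
    (g : MatF p q) : Prop :=
  AeZeroPos (fun t => a t + conv g c t) ∧
  AeZeroNeg (fun t => adjF g t + conv (adjF g) a t + c t) ∧
  AeZeroNeg (fun t => d t + conv (adjF g) b t) ∧
  AeZeroPos (fun t => g t + conv g d t + b t)


def colF {r s : ℕ} (f : MatF r s) (j : Fin s) : ℝ → Fin r → ℂ := fun t i => f t i j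

/-- Condition (L1): `α*⋄α − γ*⋄γ = e_p`, `δ*⋄δ − β*⋄β = e_q`, `α*⋄β = γ*⋄δ`,
written out in terms of the data `a,b,c,d`. -/
def CondL1 {p q : ℕ} (a : MatF p p) (b : MatF p q) (c : MatF q p) (d : MatF q q) : Prop :=
  (∀ᵐ t ∂(volume : Measure ℝ), adjF a t + a t + conv (adjF a) a t - conv (adjF c) c t = 0) ∧
  (∀ᵐ t ∂(volume : Measure ℝ), adjF d t + d t + conv (adjF d) d t - conv (adjF b) b t = 0) ∧
  (∀ᵐ t ∂(volume : Measure ℝ), b t + conv (adjF a) b t = adjF c t + conv (adjF c) d t)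

/-- The transposed identities (conditions (C4)--(C6) in the `L¹` setting). -/
def CondL1T {p q : ℕ} (a : MatF p p) (b : MatF p q) (c : MatF q p) (d : MatF q q) : Prop :=
  (∀ᵐ t ∂(volume : Measure ℝ), a t + adjF a t + conv a (adjF a) t - conv b (adjF b) t = 0) ∧
  (∀ᵐ t ∂(volume : Measure ℝ), d t + adjF d t + conv d (adjF d) t - conv c (adjF c) t = 0) ∧
  (∀ᵐ t ∂(volume : Measure ℝ), adjF c t + conv a (adjF c) t = b t + conv b (adjF d) t)

/-! ### Convolution operators on `L¹(ℝ; V)` -/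

section Operators

variable {V W U : Type*} [NormedAddCommGroup V] [NormedSpace ℂ V]
  [NormedAddCommGroup W] [NormedSpace ℂ W]
  [NormedAddCommGroup U] [NormedSpace ℂ U] {Z : Type*} [NormedAddCommGroup Z] [NormedSpace ℂ Z]

/-- Convolution of an operator-valued kernel `R` with a vector function `f`,
`t ↦ ∫ R (t - s) (f s) ds`. -/
def convV (R : ℝ → V →L[ℂ] W) (f : ℝ → V) : ℝ → W :=
  convolution R f (ContinuousLinearMap.id ℂ (V →L[ℂ] W)) volume

/-- Convolution of two operator-valued kernels, the product being composition. -/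
def convK (R : ℝ → W →L[ℂ] U) (S : ℝ → V →L[ℂ] W) : ℝ → V →L[ℂ] U :=
  convolution R S (ContinuousLinearMap.compL ℂ V W U) volume

lemma convV_apply (R : ℝ → V →L[ℂ] W) (f : ℝ → V) (t : ℝ) :
    convV R f t = ∫ s, R (t - s) (f s) := by
  simp [convV, convolution_eq_swap]

lemma integrable_convV {R : ℝ → V →L[ℂ] W} {f : ℝ → V} (hR : Integrable R)
    (hf : Integrable f) : Integrable (convV R f) :=
  hR.integrable_convolution _ hf

lemma integrable_convK {R : ℝ → W →L[ℂ] U} {S : ℝ → V →L[ℂ] W} (hR : Integrable R)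
    (hS : Integrable S) : Integrable (convK R S) :=
  hR.integrable_convolution _ hS

lemma convV_congr {R R' : ℝ → V →L[ℂ] W} {f f' : ℝ → V} (h : R =ᵐ[volume] R')
    (h' : f =ᵐ[volume] f') : convV R f = convV R' f' :=
  convolution_congr _ h h'

lemma convV_add {R : ℝ → V →L[ℂ] W} {f g : ℝ → V} (hR : Integrable R)
    (hf : Integrable f) (hg : Integrable g) :
    convV R (f + g) =ᵐ[volume] convV R f + convV R g := by
  filter_upwards [hR.ae_convolution_exists (ContinuousLinearMap.id ℂ (V →L[ℂ] W)) hf,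
    hR.ae_convolution_exists (ContinuousLinearMap.id ℂ (V →L[ℂ] W)) hg] with t h1 h2
  exact h1.distrib_add h2

lemma add_convV {R S : ℝ → V →L[ℂ] W} {f : ℝ → V} (hR : Integrable R)
    (hS : Integrable S) (hf : Integrable f) :
    convV (R + S) f =ᵐ[volume] convV R f + convV S f := by
  filter_upwards [hR.ae_convolution_exists (ContinuousLinearMap.id ℂ (V →L[ℂ] W)) hf,
    hS.ae_convolution_exists (ContinuousLinearMap.id ℂ (V →L[ℂ] W)) hf] with t h1 h2
  exact h1.add_distrib h2

lemma convV_assoc [CompleteSpace W] [CompleteSpace U] {R : ℝ → W →L[ℂ] U} {S : ℝ → V →L[ℂ] W}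
    {f : ℝ → V} (hR : Integrable R) (hS : Integrable S) (hf : Integrable f) :
    convV R (convV S f) =ᵐ[volume] convV (convK R S) f := by
  have hSf := hS.norm.integrable_convolution (ContinuousLinearMap.mul ℝ ℝ) hf.norm
  filter_upwards [hR.norm.ae_convolution_exists (ContinuousLinearMap.mul ℝ ℝ) hSf] with t ht
  refine (convolution_assoc _ _ _ _ (fun x y z => rfl) hR.1 hS.1 hf.1
    (hR.ae_convolution_exists _ hS)
    (hS.norm.ae_convolution_exists _ hf.norm) ht).symm

/-- The convolution operator with integrable kernel `R` on `L¹(ℝ; V)`. -/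
def convOp (R : ℝ → V →L[ℂ] W) (hR : Integrable R) :
    Lp V 1 (volume : Measure ℝ) →ₗ[ℂ] Lp W 1 (volume : Measure ℝ) where
  toFun f := (integrable_convV hR (L1.integrable_coeFn f)).toL1 _
  map_add' f g := by
    rw [← Integrable.toL1_add, Integrable.toL1_eq_toL1_iff,
      convV_congr (ae_eq_refl R) (Lp.coeFn_add f g)]
    exact convV_add hR (L1.integrable_coeFn f) (L1.integrable_coeFn g)
  map_smul' z f := by
    rw [RingHom.id_apply, ← Integrable.toL1_smul', Integrable.toL1_eq_toL1_iff,
      convV_congr (ae_eq_refl R) (Lp.coeFn_smul z f)]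
    refine Filter.Eventually.of_forall fun t => ?_
    simp [convV_apply, integral_smul]

lemma convOp_coe (R : ℝ → V →L[ℂ] W) (hR : Integrable R) (f : Lp V 1 (volume : Measure ℝ)) :
    convOp R hR f =ᵐ[volume] convV R f :=
  Integrable.coeFn_toL1 (integrable_convV hR (L1.integrable_coeFn f))

lemma convOp_congr {R S : ℝ → V →L[ℂ] W} (hR : Integrable R) (hS : Integrable S)
    (h : R =ᵐ[volume] S) (f : Lp V 1 (volume : Measure ℝ)) : convOp R hR f = convOp S hS f := by
  refine Lp.ext ((convOp_coe R hR f).trans ?_)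
  rw [convV_congr h (ae_eq_refl f)]
  exact (convOp_coe S hS f).symm

lemma convOp_add {R S : ℝ → V →L[ℂ] W} (hR : Integrable R) (hS : Integrable S)
    (hRS : Integrable (R + S)) (f : Lp V 1 (volume : Measure ℝ)) :
    convOp (R + S) hRS f = convOp R hR f + convOp S hS f := by
  refine Lp.ext ((convOp_coe _ _ f).trans ?_)
  refine (add_convV hR hS (L1.integrable_coeFn f)).trans ?_
  refine .trans ?_ (Lp.coeFn_add _ _).symm
  exact (convOp_coe R hR f).symm.add (convOp_coe S hS f).symm

lemma convOp_comp [CompleteSpace W] [CompleteSpace U] {R : ℝ → W →L[ℂ] U} {S : ℝ → V →L[ℂ] W}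
    (hR : Integrable R) (hS : Integrable S) (f : Lp V 1 (volume : Measure ℝ)) :
    convOp R hR (convOp S hS f) = convOp (convK R S) (integrable_convK hR hS) f := by
  refine Lp.ext ((convOp_coe _ _ _).trans ?_)
  rw [convV_congr (ae_eq_refl R) (convOp_coe S hS f)]
  exact (convV_assoc hR hS (L1.integrable_coeFn f)).trans (convOp_coe _ _ f).symm

lemma integrable_add_kernel {R S : ℝ → V →L[ℂ] W} (hR : Integrable R) (hS : Integrable S) :
    Integrable (R + S) := by
  have h := Integrable.add (ε' := V →L[ℂ] W) hR hS
  exact h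

/-- An identity `R₁ + R₂ + R₃ ⋆ R₄ = R₅ ⋆ R₆` of kernels, read as an identity of operators. -/
lemma convOp_identity [CompleteSpace W] [CompleteSpace U] [CompleteSpace Z]
    {R₁ R₂ : ℝ → V →L[ℂ] U} {R₃ : ℝ → W →L[ℂ] U} {R₄ : ℝ → V →L[ℂ] W}
    {R₅ : ℝ → Z →L[ℂ] U} {R₆ : ℝ → V →L[ℂ] Z}
    (h₁ : Integrable R₁) (h₂ : Integrable R₂) (h₃ : Integrable R₃) (h₄ : Integrable R₄)
    (h₅ : Integrable R₅) (h₆ : Integrable R₆)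
    (h : ∀ᵐ t : ℝ, R₁ t + R₂ t + convK R₃ R₄ t = convK R₅ R₆ t)
    (f : Lp V 1 (volume : Measure ℝ)) :
    convOp R₁ h₁ f + convOp R₂ h₂ f + convOp R₃ h₃ (convOp R₄ h₄ f) =
      convOp R₅ h₅ (convOp R₆ h₆ f) := by
  have h₃₄ := integrable_convK h₃ h₄
  have i₁₂ : Integrable (R₁ + R₂) := integrable_add_kernel h₁ h₂
  have i : Integrable (R₁ + R₂ + convK R₃ R₄) := integrable_add_kernel i₁₂ h₃₄
  rw [convOp_comp, convOp_comp, ← convOp_add h₁ h₂ i₁₂, ← convOp_add i₁₂ h₃₄ i]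
  exact convOp_congr i (integrable_convK h₅ h₆) h f

/-- An identity `R₁ + R₂ ⋆ R₃ = R₄ + R₅ ⋆ R₆` of kernels, read as an identity of operators. -/
lemma convOp_identity' [CompleteSpace W] [CompleteSpace U] [CompleteSpace Z]
    {R₁ R₄ : ℝ → V →L[ℂ] U} {R₂ : ℝ → W →L[ℂ] U} {R₃ : ℝ → V →L[ℂ] W}
    {R₅ : ℝ → Z →L[ℂ] U} {R₆ : ℝ → V →L[ℂ] Z}
    (h₁ : Integrable R₁) (h₂ : Integrable R₂) (h₃ : Integrable R₃) (h₄ : Integrable R₄)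
    (h₅ : Integrable R₅) (h₆ : Integrable R₆)
    (h : ∀ᵐ t : ℝ, R₁ t + convK R₂ R₃ t = R₄ t + convK R₅ R₆ t)
    (f : Lp V 1 (volume : Measure ℝ)) :
    convOp R₁ h₁ f + convOp R₂ h₂ (convOp R₃ h₃ f) =
      convOp R₄ h₄ f + convOp R₅ h₅ (convOp R₆ h₆ f) := by
  have h₂₃ := integrable_convK h₂ h₃
  have h₅₆ := integrable_convK h₅ h₆
  have il : Integrable (R₁ + convK R₂ R₃) := integrable_add_kernel h₁ h₂₃
  have ir : Integrable (R₄ + convK R₅ R₆) := integrable_add_kernel h₄ h₅₆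
  rw [convOp_comp, convOp_comp, ← convOp_add h₁ h₂₃ il, ← convOp_add h₄ h₅₆ ir]
  exact convOp_congr il ir h f

/-! ### Extension by zero and restriction -/

/-- Extension by zero from `S` to the line; `μ'` is the restriction of Lebesgue measure to `S`. -/
def extL1 {μ' : Measure ℝ} {S : Set ℝ} (hμ : μ' = volume.restrict S) (hS : MeasurableSet S) :
    Lp V 1 μ' →ₗ[ℂ] Lp V 1 (volume : Measure ℝ) where
  toFun f := ((integrable_indicator_iff hS).2
    (show IntegrableOn f S volume from hμ ▸ L1.integrable_coeFn f) :
    Integrable (S.indicator f)).toL1 _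
  map_add' f g := by
    rw [← Integrable.toL1_add, Integrable.toL1_eq_toL1_iff, ← Set.indicator_add',
      ← ae_eq_restrict_iff_indicator_ae_eq hS, ← hμ]
    exact Lp.coeFn_add f g
  map_smul' z f := by
    rw [RingHom.id_apply, ← Integrable.toL1_smul', Integrable.toL1_eq_toL1_iff,
      show z • S.indicator f = S.indicator (z • (f : ℝ → V)) from
        (Set.indicator_const_smul S z f).symm,
      ← ae_eq_restrict_iff_indicator_ae_eq hS, ← hμ]
    exact Lp.coeFn_smul z f

/-- Restriction of an `L¹` function on the line to `S`. -/
def resL1 {μ' : Measure ℝ} {S : Set ℝ} (hμ : μ' = volume.restrict S) :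
    Lp V 1 (volume : Measure ℝ) →ₗ[ℂ] Lp V 1 μ' where
  toFun f := (show Integrable f μ' by
    rw [hμ]; exact (L1.integrable_coeFn f).restrict).toL1 _
  map_add' f g := by
    rw [← Integrable.toL1_add, Integrable.toL1_eq_toL1_iff, hμ]
    exact ae_restrict_of_ae (Lp.coeFn_add f g)
  map_smul' z f := by
    rw [RingHom.id_apply, ← Integrable.toL1_smul', Integrable.toL1_eq_toL1_iff, hμ]
    exact ae_restrict_of_ae (Lp.coeFn_smul z f)

lemma extL1_coe {μ' : Measure ℝ} {S : Set ℝ} (hμ : μ' = volume.restrict S)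
    (hS : MeasurableSet S) (f : Lp V 1 μ') :
    extL1 hμ hS f =ᵐ[volume] S.indicator f :=
  Integrable.coeFn_toL1 ((integrable_indicator_iff hS).2
    (show IntegrableOn f S volume from hμ ▸ L1.integrable_coeFn f))

lemma resL1_coe {μ' : Measure ℝ} {S : Set ℝ} (hμ : μ' = volume.restrict S)
    (f : Lp V 1 (volume : Measure ℝ)) : resL1 hμ f =ᵐ[μ'] f :=
  Integrable.coeFn_toL1 (show Integrable f μ' by
    rw [hμ]; exact (L1.integrable_coeFn f).restrict)

lemma resL1_extL1 {μ' : Measure ℝ} {S : Set ℝ} (hμ : μ' = volume.restrict S)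
    (hS : MeasurableSet S) (f : Lp V 1 μ') : resL1 hμ (extL1 hμ hS f) = f := by
  subst hμ
  refine Lp.ext ((resL1_coe rfl _).trans ?_)
  filter_upwards [ae_restrict_of_ae (s := S) (extL1_coe rfl hS f),
    indicator_ae_eq_restrict (f := f) hS] with t e₁ e₂
  rw [e₁, e₂]

/-- The two half-line projections add up to the identity: the half-lines meet only in the null
set `{0}`. -/
lemma proj_add {μ₁ μ₂ : Measure ℝ} (h₁ : μ₁ = volume.restrict (Ici 0))
    (h₂ : μ₂ = volume.restrict (Iic 0)) (f : Lp V 1 (volume : Measure ℝ)) :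
    extL1 h₁ measurableSet_Ici (resL1 h₁ f) + extL1 h₂ measurableSet_Iic (resL1 h₂ f) = f := by
  subst h₁ h₂
  have k₁ := (ae_eq_restrict_iff_indicator_ae_eq (measurableSet_Ici (a := (0 : ℝ)))).1
    (resL1_coe rfl f)
  have k₂ := (ae_eq_restrict_iff_indicator_ae_eq (measurableSet_Iic (a := (0 : ℝ)))).1
    (resL1_coe rfl f)
  refine Lp.ext ((Lp.coeFn_add _ _).trans ?_)
  filter_upwards [extL1_coe rfl measurableSet_Ici (resL1 rfl f),
    extL1_coe rfl measurableSet_Iic (resL1 rfl f), k₁, k₂,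
    (compl_mem_ae_iff.2 (by simp) : ({0}ᶜ : Set ℝ) ∈ ae volume)] with t e₁ e₂ e₃ e₄ h0
  rw [Pi.add_apply, e₁, e₂, e₃, e₄]
  rcases lt_or_gt_of_ne (show t ≠ 0 from h0) with h | h
  · simp [h.le, h.not_ge]
  · simp [h.le, h.not_ge]

lemma convV_extL1 {μ' : Measure ℝ} {S : Set ℝ} (hμ : μ' = volume.restrict S)
    (hS : MeasurableSet S) (R : ℝ → V →L[ℂ] W) (f : Lp V 1 μ') (t : ℝ) :
    convV R (extL1 hμ hS f) t = ∫ s, R (t - s) (f s) ∂μ' := by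
  subst hμ
  rw [convV_congr (ae_eq_refl R) (extL1_coe rfl hS f), convV_apply, ← integral_indicator hS]
  refine integral_congr_ae (Filter.Eventually.of_forall fun s => ?_)
  by_cases h : s ∈ S <;> simp [h]

/-- A compressed convolution operator is given by the integral formula. -/
lemma resL1_convOp_extL1 {μ₁ μ₂ : Measure ℝ} {S₁ S₂ : Set ℝ} (h₁ : μ₁ = volume.restrict S₁)
    (hS₁ : MeasurableSet S₁) (h₂ : μ₂ = volume.restrict S₂)
    {R : ℝ → V →L[ℂ] W} (hR : Integrable R) (f : Lp V 1 μ₁) :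
    resL1 h₂ (convOp R hR (extL1 h₁ hS₁ f)) =ᵐ[μ₂] fun t => ∫ s, R (t - s) (f s) ∂μ₁ := by
  subst h₂
  refine (resL1_coe rfl _).trans ?_
  filter_upwards [ae_restrict_of_ae (s := S₂) (convOp_coe R hR (extL1 h₁ hS₁ f))] with t ht
  rw [ht, convV_extL1]

/-- A kernel vanishing on the positive half-line maps functions supported on the negative
half-line to functions supported there. -/
lemma compress_pos_neg {μ₁ μ₂ : Measure ℝ} (h₁ : μ₁ = volume.restrict (Ici 0))
    (h₂ : μ₂ = volume.restrict (Iic 0)) {R : ℝ → V →L[ℂ] W} (hR : Integrable R)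
    (h : ∀ t > 0, R t = 0) (f : Lp V 1 μ₂) :
    resL1 h₁ (convOp R hR (extL1 h₂ measurableSet_Iic f)) = 0 := by
  subst h₁ h₂
  refine Lp.ext ((resL1_convOp_extL1 rfl measurableSet_Iic rfl hR f).trans ?_)
  refine .trans ?_ (Lp.coeFn_zero _ _ _).symm
  rw [Filter.EventuallyEq, ae_restrict_iff' measurableSet_Ici]
  filter_upwards [(compl_mem_ae_iff.2 (by simp) : ({0}ᶜ : Set ℝ) ∈ ae volume)] with t h0 ht
  have ht' : 0 < t := lt_of_le_of_ne ht (Ne.symm h0)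
  refine setIntegral_eq_zero_of_forall_eq_zero fun s hs => ?_
  rw [h (t - s) (by linarith [mem_Iic.1 hs])]
  rfl

/-- A kernel vanishing on the negative half-line maps functions supported on the positive
half-line to functions supported there. -/
lemma compress_neg_pos {μ₁ μ₂ : Measure ℝ} (h₁ : μ₁ = volume.restrict (Ici 0))
    (h₂ : μ₂ = volume.restrict (Iic 0)) {R : ℝ → V →L[ℂ] W} (hR : Integrable R)
    (h : ∀ t < 0, R t = 0) (f : Lp V 1 μ₁) :
    resL1 h₂ (convOp R hR (extL1 h₁ measurableSet_Ici f)) = 0 := by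
  subst h₁ h₂
  refine Lp.ext ((resL1_convOp_extL1 rfl measurableSet_Ici rfl hR f).trans ?_)
  refine .trans ?_ (Lp.coeFn_zero _ _ _).symm
  rw [Filter.EventuallyEq, ae_restrict_iff' measurableSet_Iic]
  filter_upwards [(compl_mem_ae_iff.2 (by simp) : ({0}ᶜ : Set ℝ) ∈ ae volume)] with t h0 ht
  have ht' : t < 0 := lt_of_le_of_ne ht h0
  refine setIntegral_eq_zero_of_forall_eq_zero fun s hs => ?_
  rw [h (t - s) (by linarith [mem_Ici.1 hs])]
  rfl

lemma resL1_extL1_pos_neg {μ₁ μ₂ : Measure ℝ} (h₁ : μ₁ = volume.restrict (Ici 0))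
    (h₂ : μ₂ = volume.restrict (Iic 0)) (f : Lp V 1 μ₂) :
    resL1 h₁ (extL1 h₂ measurableSet_Iic f) = 0 := by
  have h := proj_add h₁ h₂ (extL1 h₂ measurableSet_Iic f)
  rw [resL1_extL1, add_eq_right] at h
  rw [← resL1_extL1 h₁ measurableSet_Ici (resL1 h₁ (extL1 h₂ measurableSet_Iic f)), h, map_zero]

lemma resL1_extL1_neg_pos {μ₁ μ₂ : Measure ℝ} (h₁ : μ₁ = volume.restrict (Ici 0))
    (h₂ : μ₂ = volume.restrict (Iic 0)) (f : Lp V 1 μ₁) :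
    resL1 h₂ (extL1 h₁ measurableSet_Ici f) = 0 := by
  have h := proj_add h₁ h₂ (extL1 h₁ measurableSet_Ici f)
  rw [resL1_extL1, add_eq_left] at h
  rw [← resL1_extL1 h₂ measurableSet_Iic (resL1 h₂ (extL1 h₁ measurableSet_Ici f)), h, map_zero]

end Operators

/-! ### Matrix kernels -/

section MatrixKernels

variable {k l m n : ℕ}

/-- A matrix function regarded as an operator-valued kernel: `t ↦ (v ↦ r t *ᵥ v)`. -/
def matKer (r : MatF k m) : ℝ → (Fin m → ℂ) →L[ℂ] (Fin k → ℂ) :=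
  fun t => LinearMap.toContinuousLinearMap (Matrix.mulVecLin (r t))

lemma matKer_apply (r : MatF k m) (t : ℝ) (v : Fin m → ℂ) : matKer r t v = (r t).mulVec v := rfl

lemma matKer_add (r s : MatF k m) (t : ℝ) : matKer (r + s) t = matKer r t + matKer s t := by
  ext1 v
  exact Matrix.add_mulVec (r t) (s t) v

lemma matKer_congr {r s : MatF k m} {t : ℝ} (h : r t = s t) : matKer r t = matKer s t := by
  rw [matKer, matKer, h]

lemma integrable_sum_smul {F : Type*} [NormedAddCommGroup F] [NormedSpace ℂ F] {r : MatF k m}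
    (hr : ∀ i j, Integrable fun t => r t i j) (E : Fin k → Fin m → F) :
    Integrable fun t => ∑ i, ∑ j, r t i j • E i j :=
  integrable_finsetSum _ fun i _ => integrable_finsetSum _ fun j _ => (hr i j).smul_const (E i j)

lemma matKer_eq_sum (r : MatF k m) (t : ℝ) : ∑ i, ∑ j, r t i j •
    LinearMap.toContinuousLinearMap (Matrix.mulVecLin (Matrix.single i j (1 : ℂ))) =
    matKer r t := by
  ext v i
  simp only [matKer_apply, _root_.sum_apply, _root_.smul_apply,
    LinearMap.coe_toContinuousLinearMap', Matrix.mulVecLin_apply, Finset.sum_apply, Pi.smul_apply,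
    Matrix.single_mulVec]
  simp [Matrix.mulVec, dotProduct, Function.update_apply]

lemma integrable_matKer {r : MatF k m} (hr : ∀ i j, Integrable fun t => r t i j) :
    Integrable (matKer r) :=
  (integrable_sum_smul hr _).congr (Filter.Eventually.of_forall (matKer_eq_sum r))

lemma matKer_conv {r : MatF k l} {s : MatF l m} (hr : ∀ i j, Integrable fun t => r t i j)
    (hs : ∀ i j, Integrable fun t => s t i j) :
    matKer (conv r s) =ᵐ[volume] convK (matKer r) (matKer s) := by
  filter_upwards [(integrable_matKer hr).ae_convolution_exists
    (ContinuousLinearMap.compL ℂ (Fin m → ℂ) (Fin l → ℂ) (Fin k → ℂ)) (integrable_matKer hs)]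
    with t ht
  have hI := ht.integrable_swap
  rw [convK, convolution_eq_swap]
  refine ContinuousLinearMap.coe_injective (LinearMap.pi_ext' fun j => LinearMap.ext_ring ?_)
  funext i
  have := ContinuousLinearMap.integral_comp_comm
    ((ContinuousLinearMap.proj (R := ℂ) (φ := fun _ : Fin k => ℂ) i).comp
      (ContinuousLinearMap.apply ℂ (Fin k → ℂ) (Pi.single j (1 : ℂ) : Fin m → ℂ))) hI
  refine Eq.trans ?_ this
  simp [matKer, conv, Matrix.mul_apply, Matrix.mulVec, dotProduct, Pi.single_apply]

/-- The convolution operator on `L¹(ℝ)^m` with a matrix kernel having integrable entries. -/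
def convM (r : MatF k m) (hr : ∀ i j, Integrable fun t => r t i j) :
    Lp (Fin m → ℂ) 1 (volume : Measure ℝ) →ₗ[ℂ] Lp (Fin k → ℂ) 1 (volume : Measure ℝ) :=
  convOp (matKer r) (integrable_matKer hr)

/-- The operator with symbol `e + r`: the identity plus convolution with `r`. -/
def idConvM (r : MatF k k) (hr : ∀ i j, Integrable fun t => r t i j) :
    Lp (Fin k → ℂ) 1 (volume : Measure ℝ) →ₗ[ℂ] Lp (Fin k → ℂ) 1 (volume : Measure ℝ) :=
  LinearMap.id + convM r hr

lemma idConvM_apply (r : MatF k k) (hr : ∀ i j, Integrable fun t => r t i j)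
    (f : Lp (Fin k → ℂ) 1 (volume : Measure ℝ)) : idConvM r hr f = f + convM r hr f := rfl

/-- An identity `r₁ + r₂ + r₃ ⋆ r₄ - r₅ ⋆ r₆ = 0` of kernels, read as an identity of operators. -/
lemma convM_identity {r₁ r₂ : MatF k m} {r₃ : MatF k l} {r₄ : MatF l m} {r₅ : MatF k n}
    {r₆ : MatF n m} (h₁ : ∀ i j, Integrable fun t => r₁ t i j)
    (h₂ : ∀ i j, Integrable fun t => r₂ t i j) (h₃ : ∀ i j, Integrable fun t => r₃ t i j)
    (h₄ : ∀ i j, Integrable fun t => r₄ t i j) (h₅ : ∀ i j, Integrable fun t => r₅ t i j)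
    (h₆ : ∀ i j, Integrable fun t => r₆ t i j)
    (h : ∀ᵐ t : ℝ, r₁ t + r₂ t + conv r₃ r₄ t - conv r₅ r₆ t = 0)
    (f : Lp (Fin m → ℂ) 1 (volume : Measure ℝ)) :
    convM r₁ h₁ f + convM r₂ h₂ f + convM r₃ h₃ (convM r₄ h₄ f) = convM r₅ h₅ (convM r₆ h₆ f) := by
  refine convOp_identity _ _ _ _ _ _ ?_ f
  filter_upwards [h, matKer_conv h₃ h₄, matKer_conv h₅ h₆] with t ht e₁ e₂
  rw [← e₁, ← e₂, ← matKer_add, ← matKer_add]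
  exact matKer_congr (sub_eq_zero.1 ht)

/-- An identity `r₁ + r₂ ⋆ r₃ = r₄ + r₅ ⋆ r₆` of kernels, read as an identity of operators. -/
lemma convM_identity' {r₁ r₄ : MatF k m} {r₂ : MatF k l} {r₃ : MatF l m} {r₅ : MatF k n}
    {r₆ : MatF n m} (h₁ : ∀ i j, Integrable fun t => r₁ t i j)
    (h₂ : ∀ i j, Integrable fun t => r₂ t i j) (h₃ : ∀ i j, Integrable fun t => r₃ t i j)
    (h₄ : ∀ i j, Integrable fun t => r₄ t i j) (h₅ : ∀ i j, Integrable fun t => r₅ t i j)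
    (h₆ : ∀ i j, Integrable fun t => r₆ t i j)
    (h : ∀ᵐ t : ℝ, r₁ t + conv r₂ r₃ t = r₄ t + conv r₅ r₆ t)
    (f : Lp (Fin m → ℂ) 1 (volume : Measure ℝ)) :
    convM r₁ h₁ f + convM r₂ h₂ (convM r₃ h₃ f) =
      convM r₄ h₄ f + convM r₅ h₅ (convM r₆ h₆ f) := by
  refine convOp_identity' _ _ _ _ _ _ ?_ f
  filter_upwards [h, matKer_conv h₂ h₃, matKer_conv h₅ h₆] with t ht e₁ e₂
  rw [← e₁, ← e₂, ← matKer_add, ← matKer_add]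
  exact matKer_congr ht

lemma integrable_adjF {r : MatF k m} (hr : ∀ i j, Integrable fun t => r t i j) (i : Fin m)
    (j : Fin k) : Integrable fun t => adjF r t i j :=
  (Complex.conjCLE.integrable_comp_iff (φ := fun t => r (-t) j i)).2 (hr j i).comp_neg

lemma adjF_adjF (r : MatF k m) : adjF (adjF r) = r := by
  funext t
  simp [adjF]

lemma adjF_conv (r : MatF k l) (s : MatF l m) (t : ℝ) :
    adjF (conv r s) t = conv (adjF s) (adjF r) t := by
  ext i j
  simp only [adjF, conv, Matrix.conjTranspose_apply, Matrix.of_apply]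
  rw [← integral_sub_right_eq_self _ t, RCLike.star_def, ← integral_conj]
  refine integral_congr_ae (Filter.Eventually.of_forall fun τ => ?_)
  simp only [← Matrix.conjTranspose_mul]
  rw [Matrix.conjTranspose_apply, RCLike.star_def, show -t - (τ - t) = -τ by ring,
    show -(t - τ) = τ - t by ring]

/-- The adjoint of the identity `b + a* ⋆ b = c* + c* ⋆ d`. -/
lemma adjoint_identity {p q : ℕ} {a : MatF p p} {b : MatF p q} {c : MatF q p} {d : MatF q q}
    (h : ∀ᵐ t : ℝ, b t + conv (adjF a) b t = adjF c t + conv (adjF c) d t) :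
    ∀ᵐ t : ℝ, adjF b t + conv (adjF b) a t = c t + conv (adjF d) c t := by
  filter_upwards [(quasiMeasurePreserving_neg (volume : Measure ℝ)).ae h] with t ht
  have h₁ := adjF_conv (adjF a) b t
  have h₂ := adjF_conv (adjF c) d t
  rw [adjF_adjF] at h₁ h₂
  rw [← h₁, ← h₂]
  simpa [adjF] using congrArg Matrix.conjTranspose ht

lemma matKer_eq_zero {r : MatF k m} {t : ℝ} (h : r t = 0) : matKer r t = 0 := by
  ext v
  simp [matKer_apply, h]

lemma adjF_zero_pos {r : MatF k m} (h : L1Plus r) : ∀ t > 0, adjF r t = 0 := fun t ht => by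
  rw [adjF, h.2 (-t) (by linarith), Matrix.conjTranspose_zero]

lemma adjF_zero_neg {r : MatF k m} (h : L1Minus r) : ∀ t < 0, adjF r t = 0 := fun t ht => by
  rw [adjF, h.2 (-t) (by linarith), Matrix.conjTranspose_zero]

/-! ### Wiener–Hopf and Hankel operators as compressions -/

lemma μP_eq : μP = volume.restrict (Ici 0) := rfl

lemma μM_eq : μM = volume.restrict (Iic 0) := rfl

/-- Extension by zero from the positive half-line. -/
def iP (n : ℕ) : L1P n →ₗ[ℂ] Lp (Fin n → ℂ) 1 (volume : Measure ℝ) :=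
  extL1 μP_eq measurableSet_Ici

/-- Extension by zero from the negative half-line. -/
def iM (n : ℕ) : L1M n →ₗ[ℂ] Lp (Fin n → ℂ) 1 (volume : Measure ℝ) :=
  extL1 μM_eq measurableSet_Iic

/-- Restriction to the positive half-line. -/
def rP (n : ℕ) : Lp (Fin n → ℂ) 1 (volume : Measure ℝ) →ₗ[ℂ] L1P n :=
  resL1 μP_eq

/-- Restriction to the negative half-line. -/
def rM (n : ℕ) : Lp (Fin n → ℂ) 1 (volume : Measure ℝ) →ₗ[ℂ] L1M n :=
  resL1 μM_eq

/-- The Wiener–Hopf operator with symbol `e + r` is the compression of `idConvM r`. -/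
lemma IsTP.eq_one {r : MatF k k} (hr : ∀ i j, Integrable fun t => r t i j)
    {T : L1P k →L[ℂ] L1P k} (hT : IsTP 1 r T) (f : L1P k) :
    T f = rP k (idConvM r hr (iP k f)) := by
  rw [idConvM_apply, map_add, rP, iP, resL1_extL1, convM]
  refine Lp.ext ((hT f).trans (.trans ?_ (Lp.coeFn_add _ _).symm))
  filter_upwards [resL1_convOp_extL1 μP_eq measurableSet_Ici
    μP_eq (integrable_matKer hr) f] with t ht
  rw [Pi.add_apply, ht, Matrix.one_mulVec]
  rfl

lemma IsTM.eq_one {r : MatF k k} (hr : ∀ i j, Integrable fun t => r t i j)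
    {T : L1M k →L[ℂ] L1M k} (hT : IsTM 1 r T) (f : L1M k) :
    T f = rM k (idConvM r hr (iM k f)) := by
  rw [idConvM_apply, map_add, rM, iM, resL1_extL1, convM]
  refine Lp.ext ((hT f).trans (.trans ?_ (Lp.coeFn_add _ _).symm))
  filter_upwards [resL1_convOp_extL1 μM_eq measurableSet_Iic
    μM_eq (integrable_matKer hr) f] with t ht
  rw [Pi.add_apply, ht, Matrix.one_mulVec]
  rfl

lemma IsTP.eq_zero {r : MatF k m} (hr : ∀ i j, Integrable fun t => r t i j)
    {T : L1P m →L[ℂ] L1P k} (hT : IsTP 0 r T) (f : L1P m) :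
    T f = rP k (convM r hr (iP m f)) := by
  refine Lp.ext ((hT f).trans (.trans ?_ (resL1_convOp_extL1
    μP_eq measurableSet_Ici
    μP_eq (integrable_matKer hr) f).symm))
  simp [matKer_apply]

lemma IsTM.eq_zero {r : MatF k m} (hr : ∀ i j, Integrable fun t => r t i j)
    {T : L1M m →L[ℂ] L1M k} (hT : IsTM 0 r T) (f : L1M m) :
    T f = rM k (convM r hr (iM m f)) := by
  refine Lp.ext ((hT f).trans (.trans ?_ (resL1_convOp_extL1
    μM_eq measurableSet_Iic
    μM_eq (integrable_matKer hr) f).symm))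
  simp [matKer_apply]

lemma IsHP.eq {r : MatF k m} (hr : ∀ i j, Integrable fun t => r t i j)
    {H : L1M m →L[ℂ] L1P k} (hH : IsHP r H) (f : L1M m) :
    H f = rP k (convM r hr (iM m f)) :=
  Lp.ext ((hH f).trans (resL1_convOp_extL1
    μM_eq measurableSet_Iic
    μP_eq (integrable_matKer hr) f).symm)

lemma IsHM.eq {r : MatF k m} (hr : ∀ i j, Integrable fun t => r t i j)
    {H : L1P m →L[ℂ] L1M k} (hH : IsHM r H) (f : L1P m) :
    H f = rM k (convM r hr (iP m f)) :=
  Lp.ext ((hH f).trans (resL1_convOp_extL1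
    μP_eq measurableSet_Ici
    μM_eq (integrable_matKer hr) f).symm)

lemma rP_iM (f : L1M k) : rP k (iM k f) = 0 := resL1_extL1_pos_neg μP_eq μM_eq f

lemma rM_iP (f : L1P k) : rM k (iP k f) = 0 := resL1_extL1_neg_pos μP_eq μM_eq f

/-- A Hankel operator ignores the constant term of its symbol. -/
lemma IsHP.eq_one {r : MatF k k} (hr : ∀ i j, Integrable fun t => r t i j)
    {H : L1M k →L[ℂ] L1P k} (hH : IsHP r H) (f : L1M k) :
    H f = rP k (idConvM r hr (iM k f)) := by
  rw [idConvM_apply, map_add, rP_iM, zero_add, hH.eq hr]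

lemma IsHM.eq_one {r : MatF k k} (hr : ∀ i j, Integrable fun t => r t i j)
    {H : L1P k →L[ℂ] L1M k} (hH : IsHM r H) (f : L1P k) :
    H f = rM k (idConvM r hr (iP k f)) := by
  rw [idConvM_apply, map_add, rM_iP, zero_add, hH.eq hr]

lemma rP_convM_iM {r : MatF k m} (hr : ∀ i j, Integrable fun t => r t i j)
    (h : ∀ t > 0, r t = 0) (f : L1M m) : rP k (convM r hr (iM m f)) = 0 :=
  compress_pos_neg μP_eq μM_eq (integrable_matKer hr) (fun t ht => matKer_eq_zero (h t ht)) f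

lemma rM_convM_iP {r : MatF k m} (hr : ∀ i j, Integrable fun t => r t i j)
    (h : ∀ t < 0, r t = 0) (f : L1P m) : rM k (convM r hr (iP m f)) = 0 :=
  compress_neg_pos μP_eq μM_eq (integrable_matKer hr) (fun t ht => matKer_eq_zero (h t ht)) f

end MatrixKernels

/-! ### The algebraic core -/

section Algebra

variable {X Xp Xm Y Yp Ym : Type*} [AddCommGroup X] [Module ℂ X] [AddCommGroup Xp] [Module ℂ Xp]
  [AddCommGroup Xm] [Module ℂ Xm] [AddCommGroup Y] [Module ℂ Y] [AddCommGroup Yp] [Module ℂ Yp]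
  [AddCommGroup Ym] [Module ℂ Ym]

/-- The four block identities behind `M · diag(I, -I) · M = diag(M₁₁, -M₂₂)`, for abstract
operators `A, B, C, D` on decomposed spaces `X = Xp ⊕ Xm`, `Y = Yp ⊕ Ym` (the `i`'s are the
inclusions, the `r`'s the projections). With `Θ = [[A, B], [C, D]]`, `Θs` its formal adjoint and
`P` the projection onto the plus parts, `W = Θ P J Θs` satisfies `W J W = W`, because
`Θs J Θ = J`; the triangularity of `As, Bs, Cs, Ds` and `Θ J Θs = J` identify the compression of
`W + diag(0, I)` with `M`. -/
lemma block_identities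
    (ixp : Xp →ₗ[ℂ] X) (ixm : Xm →ₗ[ℂ] X) (rxp : X →ₗ[ℂ] Xp) (rxm : X →ₗ[ℂ] Xm)
    (iyp : Yp →ₗ[ℂ] Y) (iym : Ym →ₗ[ℂ] Y) (ryp : Y →ₗ[ℂ] Yp) (rym : Y →ₗ[ℂ] Ym)
    (hx : ∀ x, ixp (rxp x) + ixm (rxm x) = x) (hy : ∀ y, iyp (ryp y) + iym (rym y) = y)
    (hxp : ∀ u, rxp (ixp u) = u) (hyp : ∀ u, ryp (iyp u) = u) (hym : ∀ u, rym (iym u) = u)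
    (A As : X →ₗ[ℂ] X) (B : Y →ₗ[ℂ] X) (Bs : X →ₗ[ℂ] Y) (C : X →ₗ[ℂ] Y) (Cs : Y →ₗ[ℂ] X)
    (D Ds : Y →ₗ[ℂ] Y)
    (hAA : ∀ x, As (A x) = x + Cs (C x)) (hDD : ∀ y, Ds (D y) = y + Bs (B y))
    (hAB : ∀ y, As (B y) = Cs (D y)) (hBA : ∀ x, Bs (A x) = Ds (C x))
    (hDDs : ∀ y, D (Ds y) = y + C (Cs y)) (hACs : ∀ y, A (Cs y) = B (Ds y))
    (tA : ∀ u, rxp (As (ixm u)) = 0) (tB : ∀ u, ryp (Bs (ixm u)) = 0)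
    (tC : ∀ u, rxm (Cs (iyp u)) = 0) (tD : ∀ u, rym (Ds (iyp u)) = 0)
    (M11 : Xp → Xp) (M12 : Ym → Xp) (M21 : Xp → Ym) (M22 : Ym → Ym)
    (h11 : ∀ u, M11 u = rxp (A (ixp (rxp (As (ixp u))))) - rxp (B (iyp (ryp (Bs (ixp u))))))
    (h12 : ∀ u, M12 u = rxp (B (iym (rym (Ds (iym u))))) - rxp (A (ixm (rxm (Cs (iym u))))))
    (h21 : ∀ u, M21 u = rym (C (ixp (rxp (As (ixp u))))) - rym (D (iyp (ryp (Bs (ixp u))))))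
    (h22 : ∀ u, M22 u = rym (D (iym (rym (Ds (iym u))))) - rym (C (ixm (rxm (Cs (iym u)))))) :
    (∀ u, M11 (M11 u) - M12 (M21 u) = M11 u) ∧ (∀ u, M11 (M12 u) = M12 (M22 u)) ∧
    (∀ u, M21 (M11 u) = M22 (M21 u)) ∧ (∀ u, M22 (M22 u) - M21 (M12 u) = M22 u) := by
  have ex : ∀ x, ixm (rxm x) = x - ixp (rxp x) := fun x => eq_sub_of_add_eq' (hx x)
  have ey : ∀ y, iym (rym y) = y - iyp (ryp y) := fun y => eq_sub_of_add_eq' (hy y)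
  -- Triangularity: the projection on the right of each starred operator can be dropped.
  have sA : ∀ x, rxp (As (ixp (rxp x))) = rxp (As x) := fun x => by
    conv_rhs => rw [← hx x, map_add, map_add, tA, add_zero]
  have sB : ∀ x, ryp (Bs (ixp (rxp x))) = ryp (Bs x) := fun x => by
    conv_rhs => rw [← hx x, map_add, map_add, tB, add_zero]
  have sC : ∀ y, rxm (Cs (iym (rym y))) = rxm (Cs y) := fun y => by
    conv_rhs => rw [← hy y, map_add, map_add, tC, zero_add]
  have sD : ∀ y, rym (Ds (iym (rym y))) = rym (Ds y) := fun y => by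
    conv_rhs => rw [← hy y, map_add, map_add, tD, zero_add]
  -- Second-column entries of `W + diag(0, I)`.
  have w12 : ∀ y, B (iym (rym (Ds y))) - A (ixm (rxm (Cs y)))
      = A (ixp (rxp (Cs y))) - B (iyp (ryp (Ds y))) := fun y => by
    simp only [ex, ey, map_sub, hACs]; abel
  have w22 : ∀ y, D (iym (rym (Ds y))) - C (ixm (rxm (Cs y)))
      = y + C (ixp (rxp (Cs y))) - D (iyp (ryp (Ds y))) := fun y => by
    simp only [ex, ey, map_sub, hDDs]; abel
  simp only [← map_sub] at h11 h12 h21 h22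
  have k11 : ∀ x, M11 (rxp x) = rxp (A (ixp (rxp (As x))) - B (iyp (ryp (Bs x)))) := fun x => by
    rw [h11, sA, sB]
  have k21 : ∀ x, M21 (rxp x) = rym (C (ixp (rxp (As x))) - D (iyp (ryp (Bs x)))) := fun x => by
    rw [h21, sA, sB]
  have k12 : ∀ y, M12 (rym y) = rxp (A (ixp (rxp (Cs y))) - B (iyp (ryp (Ds y)))) := fun y => by
    rw [h12, sC, sD, w12]
  have k22 : ∀ y, M22 (rym y) = rym (y + C (ixp (rxp (Cs y))) - D (iyp (ryp (Ds y)))) :=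
    fun y => by rw [h22, sC, sD, w22]
  refine ⟨fun u => ?_, fun u => ?_, fun u => ?_, fun u => ?_⟩
  · obtain ⟨x, rfl⟩ : ∃ x, rxp x = u := ⟨_, hxp u⟩
    simp only [k11, k21, k12]
    simp only [map_sub, map_add, hAA, hDD, hAB, hBA, hxp, hyp]
    abel
  · obtain ⟨y, rfl⟩ : ∃ y, rym y = u := ⟨_, hym u⟩
    simp only [k11, k12, k22]
    simp only [map_sub, map_add, hAA, hDD, hAB, hBA, hxp, hyp]
    abel
  · obtain ⟨x, rfl⟩ : ∃ x, rxp x = u := ⟨_, hxp u⟩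
    simp only [k11, k21, k22]
    simp only [map_sub, map_add, hAA, hDD, hAB, hBA, hxp, hyp]
    abel
  · obtain ⟨y, rfl⟩ : ∃ y, rym y = u := ⟨_, hym u⟩
    simp only [k21, k12, k22]
    simp only [map_sub, map_add, hAA, hDD, hAB, hBA, hxp, hyp]
    abel

end Algebra

section Blocks

variable {X Y : Type*} [NormedAddCommGroup X] [NormedSpace ℂ X]
  [NormedAddCommGroup Y] [NormedSpace ℂ Y]

/-- The four block identities are the entries of `M · diag(I, -I) · M = diag(M₁₁, -M₂₂)`; the
invertibility criterion and both formulas for the inverse follow formally from them. -/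
lemma block_conclusion (M11 : X →L[ℂ] X) (M12 : Y →L[ℂ] X) (M21 : X →L[ℂ] Y) (M22 : Y →L[ℂ] Y)
    (e1 : ∀ u, M11 (M11 u) - M12 (M21 u) = M11 u) (e2 : ∀ u, M11 (M12 u) = M12 (M22 u))
    (e3 : ∀ u, M21 (M11 u) = M22 (M21 u)) (e4 : ∀ u, M22 (M22 u) - M21 (M12 u) = M22 u) :
    (blockCLM M11 M12 M21 M22).comp
      ((blockCLM (ContinuousLinearMap.id ℂ X) 0 0 (-(ContinuousLinearMap.id ℂ Y))).comp
        (blockCLM M11 M12 M21 M22)) = blockCLM M11 0 0 (-M22) ∧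
    (InvertibleCLM (blockCLM M11 M12 M21 M22) ↔ InvertibleCLM M11 ∧ InvertibleCLM M22) ∧
    (∀ (N₁₁ : X →L[ℂ] X) (N₂₂ : Y →L[ℂ] Y),
      N₁₁.comp M11 = ContinuousLinearMap.id ℂ X → M11.comp N₁₁ = ContinuousLinearMap.id ℂ X →
      N₂₂.comp M22 = ContinuousLinearMap.id ℂ Y → M22.comp N₂₂ = ContinuousLinearMap.id ℂ Y →
      (blockCLM (ContinuousLinearMap.id ℂ X) (-(M12.comp N₂₂)) (-(M21.comp N₁₁))
            (ContinuousLinearMap.id ℂ Y)).comp (blockCLM M11 M12 M21 M22) =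
          ContinuousLinearMap.id ℂ (X × Y) ∧
        (blockCLM M11 M12 M21 M22).comp
          (blockCLM (ContinuousLinearMap.id ℂ X) (-(M12.comp N₂₂)) (-(M21.comp N₁₁))
            (ContinuousLinearMap.id ℂ Y)) = ContinuousLinearMap.id ℂ (X × Y) ∧
        blockCLM (ContinuousLinearMap.id ℂ X) (-(M12.comp N₂₂)) (-(M21.comp N₁₁))
            (ContinuousLinearMap.id ℂ Y) =
          blockCLM (ContinuousLinearMap.id ℂ X) (-(N₁₁.comp M12)) (-(N₂₂.comp M21))
            (ContinuousLinearMap.id ℂ Y)) := by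
  have hMJM : (blockCLM M11 M12 M21 M22).comp
      ((blockCLM (ContinuousLinearMap.id ℂ X) 0 0 (-(ContinuousLinearMap.id ℂ Y))).comp
        (blockCLM M11 M12 M21 M22)) = blockCLM M11 0 0 (-M22) := by
    refine ContinuousLinearMap.ext fun ⟨u, v⟩ => ?_
    simp only [blockCLM, ContinuousLinearMap.comp_apply, ContinuousLinearMap.prod_apply,
      _root_.add_apply, ContinuousLinearMap.coe_fst', ContinuousLinearMap.coe_snd',
      ContinuousLinearMap.id_apply, _root_.zero_apply, _root_.neg_apply,
      map_add, map_neg, add_zero, zero_add, Prod.mk.injEq]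
    refine ⟨?_, ?_⟩
    · rw [e2 v]; conv_rhs => rw [← e1 u]
      abel
    · rw [e3 u]; conv_rhs => rw [← e4 v]
      abel
  have hinv : ∀ (N₁₁ : X →L[ℂ] X) (N₂₂ : Y →L[ℂ] Y),
      N₁₁.comp M11 = ContinuousLinearMap.id ℂ X → M11.comp N₁₁ = ContinuousLinearMap.id ℂ X →
      N₂₂.comp M22 = ContinuousLinearMap.id ℂ Y → M22.comp N₂₂ = ContinuousLinearMap.id ℂ Y →
      (blockCLM (ContinuousLinearMap.id ℂ X) (-(M12.comp N₂₂)) (-(M21.comp N₁₁))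
            (ContinuousLinearMap.id ℂ Y)).comp (blockCLM M11 M12 M21 M22) =
          ContinuousLinearMap.id ℂ (X × Y) ∧
        (blockCLM M11 M12 M21 M22).comp
          (blockCLM (ContinuousLinearMap.id ℂ X) (-(M12.comp N₂₂)) (-(M21.comp N₁₁))
            (ContinuousLinearMap.id ℂ Y)) = ContinuousLinearMap.id ℂ (X × Y) ∧
        blockCLM (ContinuousLinearMap.id ℂ X) (-(M12.comp N₂₂)) (-(M21.comp N₁₁))
            (ContinuousLinearMap.id ℂ Y) =
          blockCLM (ContinuousLinearMap.id ℂ X) (-(N₁₁.comp M12)) (-(N₂₂.comp M21))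
            (ContinuousLinearMap.id ℂ Y) := by
    intro N₁ N₂ h1 h1r h2 h2r
    have a1 : ∀ u, N₁ (M11 u) = u := fun u => congrArg (· u) h1
    have a1r : ∀ u, M11 (N₁ u) = u := fun u => congrArg (· u) h1r
    have a2 : ∀ u, N₂ (M22 u) = u := fun u => congrArg (· u) h2
    have a2r : ∀ u, M22 (N₂ u) = u := fun u => congrArg (· u) h2r
    -- The intertwining relations pass to the inverses.
    have b2 : ∀ v, M12 (N₂ v) = N₁ (M12 v) := fun v => by
      rw [← a1 (M12 (N₂ v)), e2, a2r]
    have b3 : ∀ u, M21 (N₁ u) = N₂ (M21 u) := fun u => by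
      rw [← a2 (M21 (N₁ u)), ← e3, a1r]
    have b1 : ∀ u, N₁ (M12 (M21 u)) = M11 u - u := fun u => by
      rw [show M12 (M21 u) = M11 (M11 u) - M11 u from
        eq_sub_of_add_eq' (eq_add_of_sub_eq (e1 u)).symm,
        map_sub, a1, a1]
    have b4 : ∀ v, N₂ (M21 (M12 v)) = M22 v - v := fun v => by
      rw [show M21 (M12 v) = M22 (M22 v) - M22 v from
        eq_sub_of_add_eq' (eq_add_of_sub_eq (e4 v)).symm,
        map_sub, a2, a2]
    refine ⟨?_, ?_, ?_⟩ <;> refine ContinuousLinearMap.ext fun ⟨u, v⟩ => ?_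
    all_goals
      simp only [blockCLM, ContinuousLinearMap.comp_apply, ContinuousLinearMap.prod_apply,
        _root_.add_apply, ContinuousLinearMap.coe_fst', ContinuousLinearMap.coe_snd',
        ContinuousLinearMap.id_apply, _root_.neg_apply,
        map_add, map_neg, b2, b3, a1, a2, a1r, a2r, b1, b4, Prod.mk.injEq]
    all_goals exact ⟨by abel, by abel⟩
  refine ⟨hMJM, ⟨?_, ?_⟩, hinv⟩
  · set J : X × Y →L[ℂ] X × Y :=
      blockCLM (ContinuousLinearMap.id ℂ X) 0 0 (-(ContinuousLinearMap.id ℂ Y)) with hJdef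
    rintro ⟨S, hS1, hS2⟩
    have hS1' : ∀ w, S (blockCLM M11 M12 M21 M22 w) = w := fun w => congrArg (· w) hS1
    have hS2' : ∀ w, blockCLM M11 M12 M21 M22 (S w) = w := fun w => congrArg (· w) hS2
    have hM : ∀ w, blockCLM M11 M12 M21 M22 (J (blockCLM M11 M12 M21 M22 w)) =
        (M11 w.1, -M22 w.2) :=
      fun w => (congrArg (· w) hMJM).trans (by simp [blockCLM])
    have hJ : ∀ w, J (J w) = w := fun w => by simp [J, blockCLM]
    -- `S J S` inverts `M J M = diag(M₁₁, -M₂₂)`; its diagonal entries invert `M₁₁` and `-M₂₂`.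
    have hl : ∀ w : X × Y, S (J (S (M11 w.1, -M22 w.2))) = w := fun w => by
      rw [← hM, hS1', hJ, hS1']
    have hr : ∀ w : X × Y, (M11 (S (J (S w))).1, -M22 (S (J (S w))).2) = w := fun w => by
      rw [← hM, hS2', hJ, hS2']
    refine ⟨⟨(ContinuousLinearMap.fst ℂ X Y).comp ((S.comp (J.comp S)).comp
        (ContinuousLinearMap.inl ℂ X Y)), ?_, ?_⟩,
      ⟨-(ContinuousLinearMap.snd ℂ X Y).comp ((S.comp (J.comp S)).comp
        (ContinuousLinearMap.inr ℂ X Y)), ?_, ?_⟩⟩ <;>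
      refine ContinuousLinearMap.ext fun u => ?_
    · simpa using congrArg Prod.fst (hl (u, 0))
    · simpa using congrArg Prod.fst (hr (u, 0))
    · have := congrArg Prod.snd (hl (0, u))
      rw [map_zero, show ((0 : X), -M22 u) = -(0, M22 u) by simp, map_neg, map_neg, map_neg] at this
      simpa using this
    · simpa using congrArg Prod.snd (hr (0, u))
  · rintro ⟨⟨N₁, h1, h1r⟩, ⟨N₂, h2, h2r⟩⟩
    exact ⟨_, (hinv N₁ N₂ h1 h1r h2 h2r).1, (hinv N₁ N₂ h1 h1r h2 h2r).2.1⟩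

end Blocks

/-- Lemma 7.5: the identity `M·diag(I,−I)·M = diag(M₁₁,−M₂₂)` and the
resulting inversion formula for `M`. -/
theorem stmt8 {p q : ℕ}
    (a : MatF p p) (b : MatF p q) (c : MatF q p) (d : MatF q q)
    (ha : L1Plus a) (hb : L1Plus b) (hc : L1Minus c) (hd : L1Minus d)
    (hL1 : CondL1 a b c d) (hL1T : CondL1T a b c d)
    (Tpα : L1P p →L[ℂ] L1P p) (hTpα : IsTP 1 a Tpα)
    (Tpαs : L1P p →L[ℂ] L1P p) (hTpαs : IsTP 1 (adjF a) Tpαs)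
    (Tpβ : L1P q →L[ℂ] L1P p) (hTpβ : IsTP 0 b Tpβ)
    (Tpβs : L1P p →L[ℂ] L1P q) (hTpβs : IsTP 0 (adjF b) Tpβs)
    (Tmδ : L1M q →L[ℂ] L1M q) (hTmδ : IsTM 1 d Tmδ)
    (Tmδs : L1M q →L[ℂ] L1M q) (hTmδs : IsTM 1 (adjF d) Tmδs)
    (Tmγ : L1M p →L[ℂ] L1M q) (hTmγ : IsTM 0 c Tmγ)
    (Tmγs : L1M q →L[ℂ] L1M p) (hTmγs : IsTM 0 (adjF c) Tmγs)
    (Hpα : L1M p →L[ℂ] L1P p) (hHpα : IsHP a Hpα)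
    (Hpβ : L1M q →L[ℂ] L1P p) (hHpβ : IsHP b Hpβ)
    (Hmγ : L1P p →L[ℂ] L1M q) (hHmγ : IsHM c Hmγ)
    (Hmδ : L1P q →L[ℂ] L1M q) (hHmδ : IsHM d Hmδ) :
    (blockCLM (Tpα.comp Tpαs - Tpβ.comp Tpβs) (Hpβ.comp Tmδs - Hpα.comp Tmγs)
        (Hmγ.comp Tpαs - Hmδ.comp Tpβs) (Tmδ.comp Tmδs - Tmγ.comp Tmγs)).comp
      ((blockCLM (ContinuousLinearMap.id ℂ (L1P p)) 0 0
          (-(ContinuousLinearMap.id ℂ (L1M q)))).comp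
        (blockCLM (Tpα.comp Tpαs - Tpβ.comp Tpβs) (Hpβ.comp Tmδs - Hpα.comp Tmγs)
          (Hmγ.comp Tpαs - Hmδ.comp Tpβs) (Tmδ.comp Tmδs - Tmγ.comp Tmγs))) =
      blockCLM (Tpα.comp Tpαs - Tpβ.comp Tpβs) 0 0
        (-(Tmδ.comp Tmδs - Tmγ.comp Tmγs)) ∧
    (InvertibleCLM (blockCLM (Tpα.comp Tpαs - Tpβ.comp Tpβs)
        (Hpβ.comp Tmδs - Hpα.comp Tmγs) (Hmγ.comp Tpαs - Hmδ.comp Tpβs)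
        (Tmδ.comp Tmδs - Tmγ.comp Tmγs)) ↔
      InvertibleCLM (Tpα.comp Tpαs - Tpβ.comp Tpβs) ∧
      InvertibleCLM (Tmδ.comp Tmδs - Tmγ.comp Tmγs)) ∧
    (∀ (N₁₁ : L1P p →L[ℂ] L1P p) (N₂₂ : L1M q →L[ℂ] L1M q),
      N₁₁.comp (Tpα.comp Tpαs - Tpβ.comp Tpβs) = ContinuousLinearMap.id ℂ (L1P p) →
      (Tpα.comp Tpαs - Tpβ.comp Tpβs).comp N₁₁ = ContinuousLinearMap.id ℂ (L1P p) →
      N₂₂.comp (Tmδ.comp Tmδs - Tmγ.comp Tmγs) = ContinuousLinearMap.id ℂ (L1M q) →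
      (Tmδ.comp Tmδs - Tmγ.comp Tmγs).comp N₂₂ = ContinuousLinearMap.id ℂ (L1M q) →
      (blockCLM (ContinuousLinearMap.id ℂ (L1P p))
            (-((Hpβ.comp Tmδs - Hpα.comp Tmγs).comp N₂₂))
            (-((Hmγ.comp Tpαs - Hmδ.comp Tpβs).comp N₁₁))
            (ContinuousLinearMap.id ℂ (L1M q))).comp
          (blockCLM (Tpα.comp Tpαs - Tpβ.comp Tpβs) (Hpβ.comp Tmδs - Hpα.comp Tmγs)
            (Hmγ.comp Tpαs - Hmδ.comp Tpβs) (Tmδ.comp Tmδs - Tmγ.comp Tmγs)) =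
          ContinuousLinearMap.id ℂ (L1P p × L1M q) ∧
        (blockCLM (Tpα.comp Tpαs - Tpβ.comp Tpβs) (Hpβ.comp Tmδs - Hpα.comp Tmγs)
            (Hmγ.comp Tpαs - Hmδ.comp Tpβs) (Tmδ.comp Tmδs - Tmγ.comp Tmγs)).comp
          (blockCLM (ContinuousLinearMap.id ℂ (L1P p))
            (-((Hpβ.comp Tmδs - Hpα.comp Tmγs).comp N₂₂))
            (-((Hmγ.comp Tpαs - Hmδ.comp Tpβs).comp N₁₁))
            (ContinuousLinearMap.id ℂ (L1M q))) =
          ContinuousLinearMap.id ℂ (L1P p × L1M q) ∧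
        blockCLM (ContinuousLinearMap.id ℂ (L1P p))
            (-((Hpβ.comp Tmδs - Hpα.comp Tmγs).comp N₂₂))
            (-((Hmγ.comp Tpαs - Hmδ.comp Tpβs).comp N₁₁))
            (ContinuousLinearMap.id ℂ (L1M q)) =
          blockCLM (ContinuousLinearMap.id ℂ (L1P p))
            (-(N₁₁.comp (Hpβ.comp Tmδs - Hpα.comp Tmγs)))
            (-(N₂₂.comp (Hmγ.comp Tpαs - Hmδ.comp Tpβs)))
            (ContinuousLinearMap.id ℂ (L1M q))) := by
  have ia := ha.1
  have ib := hb.1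
  have ic := hc.1
  have idd := hd.1
  have ias := integrable_adjF ia
  have ibs := integrable_adjF ib
  have ics := integrable_adjF ic
  have ids := integrable_adjF idd
  obtain ⟨e1, e2, e3, e4⟩ := block_identities
    (iP p) (iM p) (rP p) (rM p) (iP q) (iM q) (rP q) (rM q)
    (proj_add μP_eq μM_eq) (proj_add μP_eq μM_eq) (resL1_extL1 μP_eq measurableSet_Ici)
    (resL1_extL1 μP_eq measurableSet_Ici) (resL1_extL1 μM_eq measurableSet_Iic)
    (idConvM a ia) (idConvM (adjF a) ias)
    (convM b ib) (convM (adjF b) ibs) (convM c ic) (convM (adjF c) ics)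
    (idConvM d idd) (idConvM (adjF d) ids)
    (fun x => by
      simp only [idConvM_apply, map_add]
      rw [← convM_identity ias ia ias ia ics ic hL1.1 x]
      abel)
    (fun y => by
      simp only [idConvM_apply, map_add]
      rw [← convM_identity ids idd ids idd ibs ib hL1.2.1 y]
      abel)
    (fun y => by
      simp only [idConvM_apply, map_add]
      exact convM_identity' ib ias ib ics ics idd hL1.2.2 y)
    (fun x => by
      simp only [idConvM_apply, map_add]
      exact convM_identity' ibs ibs ia ic ids ic (adjoint_identity hL1.2.2) x)
    (fun y => by
      simp only [idConvM_apply, map_add]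
      rw [← convM_identity idd ids idd ids ic ics hL1T.2.1 y]
      abel)
    (fun y => by
      simp only [idConvM_apply, map_add]
      exact convM_identity' ics ia ics ib ib ids hL1T.2.2 y)
    (fun u => by
      rw [idConvM_apply, map_add, rP_iM,
        rP_convM_iM ias (adjF_zero_pos ha), add_zero])
    (rP_convM_iM ibs (adjF_zero_pos hb))
    (rM_convM_iP ics (adjF_zero_neg hc))
    (fun u => by
      rw [idConvM_apply, map_add, rM_iP,
        rM_convM_iP ids (adjF_zero_neg hd), add_zero])
    (Tpα.comp Tpαs - Tpβ.comp Tpβs) (Hpβ.comp Tmδs - Hpα.comp Tmγs)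
    (Hmγ.comp Tpαs - Hmδ.comp Tpβs) (Tmδ.comp Tmδs - Tmγ.comp Tmγs)
    (fun u => by
      rw [Pi.sub_apply, ContinuousLinearMap.comp_apply, ContinuousLinearMap.comp_apply,
        hTpα.eq_one ia, hTpαs.eq_one ias, hTpβ.eq_zero ib, hTpβs.eq_zero ibs])
    (fun u => by
      rw [Pi.sub_apply, ContinuousLinearMap.comp_apply, ContinuousLinearMap.comp_apply,
        hHpβ.eq ib, hTmδs.eq_one ids, hHpα.eq_one ia, hTmγs.eq_zero ics])
    (fun u => by
      rw [Pi.sub_apply, ContinuousLinearMap.comp_apply, ContinuousLinearMap.comp_apply,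
        hHmγ.eq ic, hTpαs.eq_one ias, hHmδ.eq_one idd, hTpβs.eq_zero ibs])
    (fun u => by
      rw [Pi.sub_apply, ContinuousLinearMap.comp_apply, ContinuousLinearMap.comp_apply,
        hTmδ.eq_one idd, hTmδs.eq_one ids, hTmγ.eq_zero ic, hTmγs.eq_zero ics])
  exact block_conclusion _ _ _ _ e1 e2 e3 e4
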